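/- Let a, P1, P1p be real numbers with a > 0, 0 ≤ P1p ≤ P1 and a^2 * P1p ≥ 1. Then C(P1p) + C( a^2 * (P1 − P1p) / 2 ) ≥ C( (P1 + P1p) / 2 ). -/

import Mathlib

/-- Gaussian capacity function: C(x) = (1/2) * log₂(1 + x). -/
noncomputable def C (x : ℝ) : ℝ := (1/2) * Real.logb 2 (1 + x)

theorem C_le_C {x y : ℝ} (hx : -1 < x) (hxy : x ≤ y) : C x ≤ C y := by
  have hx_pos : 0 < 1 + x := neg_lt_iff_pos_add'.mp hx
  unfold C
  gcongr
  exact one_lt_two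

theorem C_add_C {x y : ℝ} (hx : 1 + x ≠ 0) (hy : 1 + y ≠ 0) :
    C x + C y = C (x + y + x * y) := by
  have hfactor : 1 + (x + y + x * y) = (1 + x) * (1 + y) := by ring
  rw [C, C, C, hfactor, Real.logb_mul hx hy, mul_add]

theorem stmt_8 (a P1 P1p : ℝ) (ha : 0 < a) (hP1p : 0 ≤ P1p) (hle : P1p ≤ P1)
    (h : 1 ≤ a ^ 2 * P1p) :
    C ((P1 + P1p) / 2) ≤ C P1p + C (a ^ 2 * (P1 - P1p) / 2) := by
  set q := a ^ 2 * (P1 - P1p) / 2 with hq_def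
  have hhalf : 0 ≤ (P1 - P1p) / 2 := by linarith
  have hq : 0 ≤ q := by rw [hq_def, mul_div_assoc]; positivity
  -- The cross term of `(1 + P1p) * (1 + q)` alone makes up for the power missing from `P1p`.
  have hcross : (P1 - P1p) / 2 ≤ P1p * q :=
    calc (P1 - P1p) / 2 ≤ a ^ 2 * P1p * ((P1 - P1p) / 2) := le_mul_of_one_le_left hhalf h
      _ = P1p * q := by rw [hq_def]; ring
  calc C ((P1 + P1p) / 2) ≤ C (P1p + q + P1p * q) := C_le_C (by linarith) (by linarith)
    _ = C P1p + C q := (C_add_C (by positivity) (by positivity)).symm
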